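/- arXiv:0807.3727 — 2 statements merged into one kernel-verified Lean document; each statement's English description precedes it below -/
import Mathlib

section
/- Let 1 → Z → G → Q → 1 be a central extension with Z ≅ ℤ and Q good (in the sense of Serre) and residually finite, such that the profinite topology of G induces the full profinite topology on Z. Then G is good. -/
/-- The differential of the complex of inhomogeneous cochains of `K` with
coefficients in a `K`-module `A`. -/
def cochainD {K : Type u} [Group K] {A : Type u} [AddCommGroup A]
    [DistribMulAction K A] (n : ℕ) (f : (Fin n → K) → A) : (Fin (n + 1) → K) → A :=
  fun g => g 0 • f (fun i => g i.succ) +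
    ∑ j : Fin (n + 1), ((-1 : ℤ) ^ ((j : ℕ) + 1)) • f (j.contractNth (· * ·) g)

/-- A cochain on `K` factors through the quotient `K/N` if it only depends on the
cosets of its arguments. -/
def FactorsThroughQuotient {K : Type u} [Group K] {A : Type u} (N : Subgroup K)
    {n : ℕ} (f : (Fin n → K) → A) : Prop :=
  ∀ g g' : Fin n → K, (∀ i, (g i)⁻¹ * g' i ∈ N) → f g = f g'

/-- Goodness in the sense of Serre: the natural maps `Hⁿ(Ĝ, A) → Hⁿ(G, A)` are
isomorphisms for every finite `G`-module `A`.  Since the continuous cohomology of the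
profinite completion is the colimit of the cohomology of the finite quotients of `G`,
this says (for each degree `n + 1`; in degree `0` the map is always an isomorphism):
every cocycle of `G` agrees, up to a coboundary, with a cocycle inflated from some
finite quotient `G/N` acting on `A`, and every inflated cocycle which becomes a
coboundary over `G` is already a coboundary over some deeper finite quotient `G/N'`. -/
def IsGood (G : Type u) [Group G] : Prop :=
  ∀ (A : Type u) [AddCommGroup A] [DistribMulAction G A], Finite A →
    ∀ n : ℕ,
      (∀ f : (Fin (n + 1) → G) → A, cochainD (n + 1) f = 0 →
        ∃ N : Subgroup G, N.Normal ∧ N.FiniteIndex ∧ (∀ x ∈ N, ∀ a : A, x • a = a) ∧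
          ∃ (e : (Fin (n + 1) → G) → A) (b : (Fin n → G) → A),
            FactorsThroughQuotient N e ∧ cochainD (n + 1) e = 0 ∧ f = e + cochainD n b) ∧
      (∀ N : Subgroup G, N.Normal → N.FiniteIndex → (∀ x ∈ N, ∀ a : A, x • a = a) →
        ∀ e : (Fin (n + 1) → G) → A, FactorsThroughQuotient N e →
          cochainD (n + 1) e = 0 → (∃ b : (Fin n → G) → A, e = cochainD n b) →
          ∃ N' : Subgroup G, N'.Normal ∧ N'.FiniteIndex ∧ N' ≤ N ∧
            ∃ b : (Fin n → G) → A, FactorsThroughQuotient N' b ∧ e = cochainD n b)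

/-- A group is residually finite if every nontrivial element survives in some
finite quotient. -/
def ResiduallyFinite (G : Type u) [Group G] : Prop :=
  ∀ g : G, g ≠ 1 → ∃ (Q : Type u) (_ : Group Q) (_ : Finite Q) (f : G →* Q), f g ≠ 1

/-!
A class in positive degree with finite coefficients which is inflated from a finite quotient dies in
a larger finite module, coinduced from that quotient. Conversely, if every class of `G` in positive
degree with finite coefficients dies in some larger finite module, then dimension shifting shows
that `G` is good.

Let `z` generate `Z`. By the condition on the profinite topology, the order of `z` in finite
quotients of `G` can be made divisible by any given number, and then the coinduced module `A'` of
such a quotient satisfies `A ⊆ (z - 1)A'`. In the Gysin sequence of the extension, the map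
`Hⁿ(G, A) → Hⁿ⁻¹(Q, A / (z - 1)A)` is therefore killed by `A → A'`, so every class becomes inflated
from `Hⁿ(Q, A'ᶻ)`, where it dies in a finite module because `Q` is good. In place of the Gysin
sequence, we use an induction on `n` by dimension shifting: modules coinduced from the trivial
subgroup, and their quotients, satisfy `(z - 1)M = M`.
-/

section Differential

/-- The pullback of a cochain of `Q` along `π : G → Q`, with coefficients pushed forward
along `ι`; for `π` a quotient map this is inflation. -/
def inflation {G Q A B : Type u} (π : G → Q) (ι : B → A) {n : ℕ} (f : (Fin n → Q) → B) :
    (Fin n → G) → A :=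
  fun g => ι (f (π ∘ g))

lemma inflation_injective {G Q A B : Type u} {π : G → Q} (hπ : Function.Surjective π) {ι : B → A}
    (hι : Function.Injective ι) (n : ℕ) :
    Function.Injective (inflation π ι : ((Fin n → Q) → B) → (Fin n → G) → A) :=
  fun _ _ h => funext (hπ.comp_left.forall.2 fun g => hι (congrFun h g))

variable {G : Type u} [Group G] {Q : Type u} [Group Q]
  {A : Type u} [AddCommGroup A] [DistribMulAction G A]
  {B : Type u} [AddCommGroup B]

lemma cochainD_add (n : ℕ) (f f' : (Fin n → G) → A) :
    cochainD n (f + f') = cochainD n f + cochainD n f' := by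
  funext g
  simp only [cochainD, Pi.add_apply, smul_add, Finset.sum_add_distrib]
  abel

lemma cochainD_sub (n : ℕ) (f f' : (Fin n → G) → A) :
    cochainD n (f - f') = cochainD n f - cochainD n f' :=
  map_sub (AddMonoidHom.mk' (cochainD n) (cochainD_add n)) f f'

lemma cochainD_zero (n : ℕ) : cochainD n (0 : (Fin n → G) → A) = 0 :=
  map_zero (AddMonoidHom.mk' (cochainD n) (cochainD_add n))

lemma cochainD_inflation [DistribMulAction Q B] (π : G →* Q) (ι : B →+ A)
    (hι : ∀ (g : G) (b : B), ι (π g • b) = g • ι b) (n : ℕ) (f : (Fin n → Q) → B) :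
    cochainD n (inflation π ι f) = inflation π ι (cochainD n f) := by
  funext g
  simp only [cochainD, inflation, map_add, map_sum, map_zsmul, Function.comp_apply, hι,
    Fin.comp_contractNth (· * ·) (· * ·) (map_mul π)]
  rfl

lemma cochainD_comp [DistribMulAction G B] (φ : A →+[G] B) (n : ℕ) (f : (Fin n → G) → A) :
    cochainD n (φ ∘ f) = φ ∘ cochainD n f :=
  cochainD_inflation (MonoidHom.id G) (φ : A →+ B) (map_smul φ) n f

lemma cochainD_smul_of_mem_center {z : G} (hz : z ∈ Subgroup.center G) (n : ℕ)
    (f : (Fin n → G) → A) : cochainD n (z • f) = z • cochainD n f :=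
  cochainD_inflation (MonoidHom.id G) (DistribSMul.toAddMonoidHom A z)
    (fun g a => by
      simp only [MonoidHom.id_apply, DistribSMul.toAddMonoidHom_apply, smul_smul,
        Subgroup.mem_center_iff.1 hz g]) n f

end Differential

namespace FactorsThroughQuotient

variable {G : Type u} [Group G] {N N' : Subgroup G} {X Y : Type u} {n : ℕ}

lemma iff_comp_mk {f : (Fin n → G) → X} :
    FactorsThroughQuotient N f ↔ ∀ g g' : Fin n → G,
      (QuotientGroup.mk ∘ g : Fin n → G ⧸ N) = QuotientGroup.mk ∘ g' → f g = f g' := by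
  simp only [FactorsThroughQuotient, funext_iff, Function.comp_apply, QuotientGroup.eq]

lemma of_degree_zero (f : (Fin 0 → G) → X) : FactorsThroughQuotient N f :=
  fun g g' _ => congrArg f (Subsingleton.elim g g')

lemma bot (f : (Fin n → G) → X) : FactorsThroughQuotient (⊥ : Subgroup G) f :=
  fun _ _ h => congrArg f (funext fun i => inv_mul_eq_one.1 (Subgroup.mem_bot.1 (h i)))

lemma mono (h : N' ≤ N) {f : (Fin n → G) → X} (hf : FactorsThroughQuotient N f) :
    FactorsThroughQuotient N' f :=
  fun g g' hg => hf g g' fun i => h (hg i)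

lemma comp {f : (Fin n → G) → X} (hf : FactorsThroughQuotient N f) (s : X → Y) :
    FactorsThroughQuotient N (s ∘ f) :=
  fun g g' hg => congrArg s (hf g g' hg)

lemma of_comp {f : (Fin n → G) → X} {s : X → Y} (hs : Function.Injective s)
    (hf : FactorsThroughQuotient N (s ∘ f)) : FactorsThroughQuotient N f :=
  fun g g' hg => hs (hf g g' hg)

protected lemma inflation {Q : Type u} [Group Q] {M : Subgroup Q} {f : (Fin n → Q) → X}
    (hf : FactorsThroughQuotient M f) (π : G →* Q) (s : X → Y) :
    FactorsThroughQuotient (M.comap π) (inflation π s f) :=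
  fun _ _ hg => congrArg s (hf _ _ fun i => by simpa using hg i)

variable {A : Type u} [AddCommGroup A]

lemma sub {f f' : (Fin n → G) → A} (hf : FactorsThroughQuotient N f)
    (hf' : FactorsThroughQuotient N f') : FactorsThroughQuotient N (f - f') :=
  fun g g' hg => congrArg₂ (· - ·) (hf g g' hg) (hf' g g' hg)

protected lemma cochainD [N.Normal] [DistribMulAction G A] {f : (Fin n → G) → A}
    (hf : FactorsThroughQuotient N f) (hN : ∀ x ∈ N, ∀ g, x • f g = f g) :
    FactorsThroughQuotient N (cochainD n f) := by
  rw [iff_comp_mk] at hf ⊢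
  intro g g' h
  have hfirst : g 0 • f (fun i => g i.succ) = g' 0 • f (fun i => g' i.succ) := by
    have h0 : (g 0)⁻¹ * g' 0 ∈ N := QuotientGroup.eq.1 (congrFun h 0)
    rw [hf _ (fun i => g' i.succ) (funext fun i => congrFun h i.succ), ← hN _ h0, smul_smul,
      mul_inv_cancel_left, hN _ h0]
  have hcontract (j : Fin (n + 1)) :
      f (j.contractNth (· * ·) g) = f (j.contractNth (· * ·) g') := by
    apply hf
    simp only [Fin.comp_contractNth (· * ·) (· * ·) (QuotientGroup.mk_mul N), h]
  simp only [cochainD, hfirst, hcontract]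

end FactorsThroughQuotient

section Coinduced

variable {G : Type u} [Group G] {A : Type u} [AddCommGroup A] {B : Type u} [AddCommGroup B]

/-- The module coinduced from the subgroup `N` acting trivially on `A`, encoded as the functions
on `G` which are constant on the cosets `xN`; `G` acts by right translation. -/
def CoinducedModule (N : Subgroup G) (A : Type u) [AddCommGroup A] : AddSubgroup (G → A) where
  carrier := {a | ∀ x, ∀ y ∈ N, a (x * y) = a x}
  zero_mem' _ _ _ := rfl
  add_mem' ha hb x y hy := congrArg₂ (· + ·) (ha x y hy) (hb x y hy)
  neg_mem' ha x y hy := congrArg (- ·) (ha x y hy)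

namespace CoinducedModule

variable {N : Subgroup G}

@[ext]
lemma ext {a b : CoinducedModule N A} (h : ∀ x, a.1 x = b.1 x) : a = b :=
  Subtype.ext (funext h)

instance [hN : N.Normal] : DistribMulAction G (CoinducedModule N A) where
  smul g a := ⟨fun x => a.1 (x * g), fun x y hy => by
    simpa [mul_assoc] using a.2 (x * g) (g⁻¹ * y * g) (by simpa using hN.conj_mem y hy g⁻¹)⟩
  one_smul a := ext fun x => congrArg a.1 (mul_one x)
  mul_smul g h a := ext fun x => congrArg a.1 (mul_assoc x g h).symm
  smul_zero _ := rfl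
  smul_add _ _ _ := rfl

lemma smul_apply [N.Normal] (g : G) (a : CoinducedModule N A) (x : G) :
    (g • a).1 x = a.1 (x * g) := rfl

instance [Finite A] [N.FiniteIndex] : Finite (CoinducedModule N A) := by
  refine Finite.of_injective (fun (a : CoinducedModule N A) (q : G ⧸ N) => a.1 q.out)
    fun a b h => ext fun x => ?_
  obtain ⟨y, hy⟩ := QuotientGroup.mk_out_eq_mul N x
  simpa only [hy, a.2 x y y.2, b.2 x y y.2] using congrFun h (x : G ⧸ N)

/-- Functoriality of coinduction in the coefficients. -/
def map [N.Normal] (φ : A →+ B) : CoinducedModule N A →+[G] CoinducedModule N B where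
  toFun a := ⟨φ ∘ a.1, fun x y hy => congrArg φ (a.2 x y hy)⟩
  map_smul' _ _ := rfl
  map_zero' := ext fun _ => map_zero φ
  map_add' _ _ := ext fun _ => map_add φ _ _

variable [DistribMulAction G A] [DistribMulAction G B]

/-- The embedding `a ↦ (x ↦ x • a)` of `A` into its coinduced module. -/
def unit [N.Normal] (hN : ∀ x ∈ N, ∀ a : A, x • a = a) : A →+[G] CoinducedModule N A where
  toFun a := ⟨fun x => x • a, fun x y hy =>
    (mul_smul x y a).trans (congrArg (x • ·) (hN y hy a))⟩
  map_smul' g a := ext fun x => (mul_smul x g a).symm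
  map_zero' := ext smul_zero
  map_add' a b := ext fun x => smul_add x a b

lemma unit_injective [N.Normal] (hN : ∀ x ∈ N, ∀ a : A, x • a = a) :
    Function.Injective (unit hN) := fun a b h => by
  have h1 : (1 : G) • a = (1 : G) • b := congrFun (congrArg Subtype.val h) 1
  simpa only [one_smul] using h1

lemma map_unit [N.Normal] (hA : ∀ x ∈ N, ∀ a : A, x • a = a) (hB : ∀ x ∈ N, ∀ b : B, x • b = b)
    (φ : A →+[G] B) (a : A) : map (φ : A →+ B) (unit hA a) = unit hB (φ a) :=
  ext fun x => map_smul φ x a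

end CoinducedModule

lemma contractNth_zero_cons {n : ℕ} (x : G) (g : Fin (n + 1) → G) :
    (0 : Fin (n + 2)).contractNth (· * ·) (Fin.cons x g : Fin (n + 2) → G) =
      Fin.cons (x * g 0) (fun i => g i.succ) := by
  funext i
  refine Fin.cases ?_ (fun i => ?_) i
  · rw [Fin.contractNth_apply_of_eq _ _ _ _ rfl]
    simp
  · rw [Fin.contractNth_apply_of_gt _ _ _ _ (by simp)]
    simp

lemma contractNth_succ_cons {n : ℕ} (j : Fin (n + 1)) (x : G) (g : Fin (n + 1) → G) :
    j.succ.contractNth (· * ·) (Fin.cons x g : Fin (n + 2) → G) =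
      Fin.cons x (j.contractNth (· * ·) g) := by
  funext i
  refine Fin.cases ?_ (fun i => ?_) i
  · rw [Fin.contractNth_apply_of_lt _ _ _ _ (by simp)]
    simp
  · simp only [Fin.contractNth, Fin.val_succ, add_lt_add_iff_right, add_left_inj, Fin.cons_succ,
      ← Fin.succ_castSucc]

/-- The cochain `(g₁, …, gₙ) ↦ (x ↦ f (x, g₁, …, gₙ))` with coinduced coefficients. -/
def FactorsThroughQuotient.curry {N : Subgroup G} {n : ℕ} {f : (Fin (n + 1) → G) → A}
    (hf : FactorsThroughQuotient N f) : (Fin n → G) → CoinducedModule N A :=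
  fun g => ⟨fun x => f (Fin.cons x g), fun _ _ hy =>
    hf _ _ (Fin.cases (by simpa using hy) (by simp))⟩

lemma FactorsThroughQuotient.curry_factorsThroughQuotient {N : Subgroup G} {n : ℕ}
    {f : (Fin (n + 1) → G) → A} (hf : FactorsThroughQuotient N f) :
    FactorsThroughQuotient N hf.curry :=
  fun _ _ h => CoinducedModule.ext fun _ => hf _ _ (Fin.cases (by simp) h)

variable [DistribMulAction G A]

/- The term of `cochainD` in which the first argument acts is the embedding of `f` into the
coinduced module; the other terms assemble to the differential of the curried cochain. -/
lemma cochainD_cons {N : Subgroup G} [N.Normal] {n : ℕ} {f : (Fin (n + 1) → G) → A}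
    (hf : FactorsThroughQuotient N f) (x : G) (g : Fin (n + 1) → G) :
    cochainD (n + 1) f (Fin.cons x g) = x • f g - (cochainD n hf.curry g).1 x := by
  have hcurry : (cochainD n hf.curry g).1 x = f (Fin.cons (x * g 0) fun i => g i.succ) +
      ∑ j : Fin (n + 1), (-1 : ℤ) ^ ((j : ℕ) + 1) • f (Fin.cons x (j.contractNth (· * ·) g)) := by
    simp [cochainD, FactorsThroughQuotient.curry, CoinducedModule.smul_apply]
  rw [hcurry]
  simp only [cochainD, Fin.sum_univ_succ (n := n + 1), Fin.cons_zero, Fin.cons_succ,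
    contractNth_zero_cons, contractNth_succ_cons, Fin.val_succ, Fin.val_zero,
    pow_succ _ (_ + 1), mul_neg_one, neg_smul, Finset.sum_neg_distrib]
  simp only [zero_add, pow_one, neg_smul, one_smul]
  abel

lemma smul_eq_of_mem_bot : ∀ x ∈ (⊥ : Subgroup G), ∀ a : A, x • a = a := by
  rintro x hx a
  rw [Subgroup.mem_bot.1 hx, one_smul]

theorem cochainD_cochainD (n : ℕ) (f : (Fin n → G) → A) : cochainD (n + 1) (cochainD n f) = 0 := by
  induction n generalizing A with
  | zero =>
    funext g
    have hf (g g' : Fin 0 → G) : f g = f g' := congrArg f (Subsingleton.elim g g')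
    simp [cochainD, Fin.sum_univ_succ, Fin.contractNth, mul_smul, hf _ default]
    abel
  | succ n ih =>
    have hcurry : (FactorsThroughQuotient.bot (cochainD (n + 1) f)).curry =
        CoinducedModule.unit smul_eq_of_mem_bot ∘ f -
          cochainD n (FactorsThroughQuotient.bot f).curry :=
      funext fun g => CoinducedModule.ext fun x =>
        cochainD_cons (FactorsThroughQuotient.bot f) x g
    funext g
    rw [← Fin.cons_self_tail g, cochainD_cons (FactorsThroughQuotient.bot _), hcurry,
      cochainD_sub, ih, sub_zero, cochainD_comp]
    exact sub_self _

lemma unit_comp_eq_cochainD_curry {N : Subgroup G} [N.Normal]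
    (hN : ∀ x ∈ N, ∀ a : A, x • a = a) {n : ℕ} {f : (Fin (n + 1) → G) → A}
    (hf : FactorsThroughQuotient N f) (hDf : cochainD (n + 1) f = 0) :
    CoinducedModule.unit hN ∘ f = cochainD n hf.curry :=
  funext fun g => CoinducedModule.ext fun x =>
    sub_eq_zero.1 ((cochainD_cons hf x g).symm.trans (congrFun hDf _))

end Coinduced

section Cokernel

lemma exists_comp_eq_of_exact {X A B C : Type u} [Zero C] {φ : A → B} {p : B → C}
    (h : Function.Exact φ p) {f : X → B} (hf : p ∘ f = 0) : ∃ f' : X → A, φ ∘ f' = f := by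
  choose f' hf' using fun x => (h (f x)).1 (congrFun hf x)
  exact ⟨f', funext hf'⟩

variable {G : Type u} [Group G] {A : Type u} [AddCommGroup A] [DistribMulAction G A]
  {B : Type u} [AddCommGroup B] [DistribMulAction G B]
  {C : Type u} [AddCommGroup C] [DistribMulAction G C]

/-- The cokernel of a homomorphism of `G`-modules. -/
def CokernelModule (φ : A →+[G] B) : Type u := B ⧸ (φ : A →+ B).range

namespace CokernelModule

variable (φ : A →+[G] B)

instance : AddCommGroup (CokernelModule φ) :=
  inferInstanceAs (AddCommGroup (B ⧸ (φ : A →+ B).range))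

instance : DistribMulAction G (CokernelModule φ) where
  smul g := QuotientAddGroup.map _ _ (DistribSMul.toAddMonoidHom B g) (by
    rintro _ ⟨a, rfl⟩
    exact ⟨g • a, map_smul φ g a⟩)
  one_smul := by
    rintro ⟨b⟩
    exact congrArg QuotientAddGroup.mk (one_smul G b)
  mul_smul g h := by
    rintro ⟨b⟩
    exact congrArg QuotientAddGroup.mk (mul_smul g h b)
  smul_zero _ := map_zero (QuotientAddGroup.map _ _ _ _)
  smul_add _ := map_add (QuotientAddGroup.map _ _ _ _)

/-- The projection onto the cokernel. -/
def mk : B →+[G] CokernelModule φ where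
  toFun := QuotientAddGroup.mk
  map_smul' _ _ := rfl
  map_zero' := rfl
  map_add' _ _ := rfl

lemma mk_surjective : Function.Surjective (mk φ) := QuotientAddGroup.mk_surjective

lemma exact_mk : Function.Exact φ (mk φ) := QuotientAddGroup.eq_zero_iff

instance [Finite B] : Finite (CokernelModule φ) := Finite.of_surjective _ (mk_surjective φ)

variable {φ}

/-- The homomorphism of cokernels induced by a commutative square. -/
def map {A' B' : Type u} [AddCommGroup A'] [DistribMulAction G A'] [AddCommGroup B']
    [DistribMulAction G B'] {φ' : A' →+[G] B'} {ψ : A →+[G] A'} (Ψ : B →+[G] B')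
    (h : ∀ a, Ψ (φ a) = φ' (ψ a)) : CokernelModule φ →+[G] CokernelModule φ' where
  toFun := QuotientAddGroup.map _ _ (Ψ : B →+ B') (by
    rintro _ ⟨a, rfl⟩
    exact ⟨ψ a, (h a).symm⟩)
  map_smul' g := by
    rintro ⟨b⟩
    exact congrArg (mk φ') (map_smul Ψ g b)
  map_zero' := map_zero (QuotientAddGroup.map _ _ _ _)
  map_add' := map_add (QuotientAddGroup.map _ _ _ _)

lemma map_mk {A' B' : Type u} [AddCommGroup A'] [DistribMulAction G A'] [AddCommGroup B']
    [DistribMulAction G B'] {φ' : A' →+[G] B'} {ψ : A →+[G] A'} {Ψ : B →+[G] B'}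
    (h : ∀ a, Ψ (φ a) = φ' (ψ a)) (b : B) : map Ψ h (mk φ b) = mk φ' (Ψ b) :=
  rfl

lemma exists_smul_sub_eq {z : G} (h : ∀ b : B, ∃ b', z • b' - b' = b) (c : CokernelModule φ) :
    ∃ c', z • c' - c' = c := by
  obtain ⟨b, rfl⟩ := mk_surjective φ c
  obtain ⟨b', rfl⟩ := h b
  exact ⟨mk φ b', by rw [map_sub, map_smul]⟩

end CokernelModule

lemma cochainD_comp_eq_zero_of_exact {φ : A →+[G] B} {p : B →+[G] C} (h : Function.Exact φ p)
    {n : ℕ} {f : (Fin (n + 1) → G) → A} {b : (Fin n → G) → B} (hb : φ ∘ f = cochainD n b) :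
    cochainD n (p ∘ b) = 0 := by
  rw [cochainD_comp, ← hb, ← Function.comp_assoc, h.comp_eq_zero]
  rfl

end Cokernel

section Coboundary

variable {G : Type u} [Group G] {A : Type u} [AddCommGroup A] [DistribMulAction G A]
  {B : Type u} [AddCommGroup B] [DistribMulAction G B]

/-- The coboundaries of cochains which factor through `G/N`; in degree `0` only the zero cochain
is one. -/
def IsCoboundary (N : Subgroup G) : {n : ℕ} → ((Fin n → G) → A) → Prop
  | 0, f => f = 0
  | n + 1, f => ∃ b : (Fin n → G) → A, FactorsThroughQuotient N b ∧ f = cochainD n b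

namespace IsCoboundary

variable {N : Subgroup G}

lemma cochainD_eq_zero {n : ℕ} {f : (Fin n → G) → A} (h : IsCoboundary N f) :
    cochainD n f = 0 := by
  cases n with
  | zero => rw [show f = 0 from h, cochainD_zero]
  | succ n =>
    obtain ⟨b, -, rfl⟩ := h
    exact cochainD_cochainD n b

lemma comp {n : ℕ} {f : (Fin n → G) → A} (h : IsCoboundary N f) (φ : A →+[G] B) :
    IsCoboundary N (φ ∘ f) := by
  cases n with
  | zero =>
    rw [show f = 0 from h]
    exact funext fun _ => map_zero φ
  | succ n =>
    obtain ⟨b, hb, rfl⟩ := h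
    exact ⟨φ ∘ b, hb.comp φ, (cochainD_comp φ n b).symm⟩

lemma factorsThroughQuotient [N.Normal] (hN : ∀ x ∈ N, ∀ a : A, x • a = a) {n : ℕ}
    {f : (Fin n → G) → A} (h : IsCoboundary N f) : FactorsThroughQuotient N f := by
  cases n with
  | zero => exact .of_degree_zero f
  | succ n =>
    obtain ⟨b, hb, rfl⟩ := h
    exact hb.cochainD fun x hx _ => hN x hx _

lemma exists_lift {n : ℕ} {f : (Fin n → G) → B} (h : IsCoboundary N f) {p : A →+[G] B}
    (hp : Function.Surjective p) : ∃ f' : (Fin n → G) → A, IsCoboundary N f' ∧ p ∘ f' = f := by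
  cases n with
  | zero =>
    rw [show f = 0 from h]
    exact ⟨0, rfl, funext fun _ => map_zero p⟩
  | succ n =>
    obtain ⟨b, hb, rfl⟩ := h
    refine ⟨cochainD n (Function.surjInv hp ∘ b), ⟨_, hb.comp _, rfl⟩, ?_⟩
    rw [← cochainD_comp, ← Function.comp_assoc, (Function.rightInverse_surjInv hp).comp_eq_id,
      Function.id_comp]

end IsCoboundary

/- Dimension shifting: `f` represents the image of the class of `p ∘ b` under the connecting map, so
replacing `p ∘ b` by the cohomologous cocycle `p ∘ x` changes `f` by a coboundary. -/
lemma exists_cocycle_of_lift {I : Type u} [AddCommGroup I] [DistribMulAction G I]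
    {i : A →+[G] I} {p : I →+[G] B} (hi : Function.Injective i) (hp : Function.Surjective p)
    (hip : Function.Exact i p) {n : ℕ} {f : (Fin (n + 1) → G) → A} {b x : (Fin n → G) → I}
    (hb : i ∘ f = cochainD n b) (hx : cochainD n (p ∘ x) = 0)
    (hbx : IsCoboundary (⊥ : Subgroup G) (p ∘ b - p ∘ x)) :
    ∃ e : (Fin (n + 1) → G) → A, i ∘ e = cochainD n x ∧ cochainD (n + 1) e = 0 ∧
      IsCoboundary (⊥ : Subgroup G) (f - e) := by
  obtain ⟨e, he⟩ := exists_comp_eq_of_exact hip (f := cochainD n x) (by rw [← cochainD_comp, hx])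
  obtain ⟨κ, hκ, hpκ⟩ := hbx.exists_lift hp
  obtain ⟨β, hβ⟩ := exists_comp_eq_of_exact hip (f := b - x - κ) (by
    rw [map_comp_sub, map_comp_sub, hpκ, sub_self])
  refine ⟨e, he, hi.comp_left ?_, β, .bot β, hi.comp_left ?_⟩
  · change i ∘ cochainD (n + 1) e = i ∘ (0 : (Fin (n + 2) → G) → A)
    rw [← cochainD_comp, he, cochainD_cochainD]
    exact funext fun _ => (map_zero i).symm
  · change i ∘ (f - e) = i ∘ cochainD n β
    rw [map_comp_sub, hb, he, ← cochainD_comp, hβ, cochainD_sub, cochainD_sub,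
      hκ.cochainD_eq_zero, sub_zero]

end Coboundary

section Effaceability

variable {G : Type u} [Group G] {A : Type u} [AddCommGroup A] [DistribMulAction G A]

lemma exists_normal_finiteIndex_smul_eq (G : Type u) [Group G] (A : Type u) [AddCommGroup A]
    [DistribMulAction G A] [Finite A] :
    ∃ K : Subgroup G, K.Normal ∧ K.FiniteIndex ∧ ∀ x ∈ K, ∀ a : A, x • a = a :=
  ⟨(MulAction.toPermHom G A).ker, inferInstance, inferInstance,
    fun _ hx a => congrArg (fun σ : Equiv.Perm A => σ a) hx⟩

/-- A cochain is effaceable if it becomes a coboundary in some finite module containing the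
original coefficients. -/
def IsEffaceable {n : ℕ} (f : (Fin (n + 1) → G) → A) : Prop :=
  ∃ (A' : Type u) (_ : AddCommGroup A') (_ : DistribMulAction G A') (_ : Finite A')
    (φ : A →+[G] A') (b : (Fin n → G) → A'), Function.Injective φ ∧ φ ∘ f = cochainD n b

/-- Every cocycle in degree `n` is cohomologous to one inflated from a finite quotient. -/
def InflationSurjective (G : Type u) [Group G] (n : ℕ) : Prop :=
  ∀ (A : Type u) [AddCommGroup A] [DistribMulAction G A] [Finite A] (f : (Fin n → G) → A),
    cochainD n f = 0 →
      ∃ N : Subgroup G, N.Normal ∧ N.FiniteIndex ∧ (∀ x ∈ N, ∀ a : A, x • a = a) ∧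
        ∃ e : (Fin n → G) → A, FactorsThroughQuotient N e ∧ cochainD n e = 0 ∧
          IsCoboundary (⊥ : Subgroup G) (f - e)

/-- Every inflated coboundary in degree `n` is a coboundary over some finite quotient. -/
def InflationInjective (G : Type u) [Group G] (n : ℕ) : Prop :=
  ∀ (A : Type u) [AddCommGroup A] [DistribMulAction G A] [Finite A] (N : Subgroup G) [N.Normal]
    [N.FiniteIndex], (∀ x ∈ N, ∀ a : A, x • a = a) →
      ∀ e : (Fin n → G) → A, FactorsThroughQuotient N e → IsCoboundary (⊥ : Subgroup G) e →
        ∃ N' : Subgroup G, N'.Normal ∧ N'.FiniteIndex ∧ N' ≤ N ∧ IsCoboundary N' e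

lemma inflationSurjective_zero : InflationSurjective G 0 := by
  intro A _ _ _ f hf
  obtain ⟨K, hK, hKfin, hKA⟩ := exists_normal_finiteIndex_smul_eq G A
  exact ⟨K, hK, hKfin, hKA, f, .of_degree_zero f, hf, sub_self f⟩

lemma inflationSurjective_succ {n : ℕ}
    (heff : ∀ (A : Type u) [AddCommGroup A] [DistribMulAction G A] [Finite A]
      (f : (Fin (n + 1) → G) → A), cochainD (n + 1) f = 0 → IsEffaceable f)
    (hsurj : InflationSurjective G n) : InflationSurjective G (n + 1) := by
  intro A _ _ _ f hf
  obtain ⟨A', _, _, _, φ, b, hφ, hb⟩ := heff A f hf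
  let p := CokernelModule.mk φ
  have hp : Function.Surjective p := CokernelModule.mk_surjective φ
  have hφp : Function.Exact φ p := CokernelModule.exact_mk φ
  obtain ⟨N, _, _, -, e, he, hDe, hcob⟩ :=
    hsurj _ (p ∘ b) (cochainD_comp_eq_zero_of_exact hφp hb)
  obtain ⟨x, rfl, hx⟩ : ∃ x : (Fin n → G) → A', p ∘ x = e ∧ FactorsThroughQuotient N x :=
    ⟨Function.surjInv hp ∘ e, funext fun _ => Function.surjInv_eq hp _, he.comp _⟩
  obtain ⟨α, hα, hDα, hcobα⟩ := exists_cocycle_of_lift hφ hp hφp hb hDe hcob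
  obtain ⟨K, _, _, hK⟩ := exists_normal_finiteIndex_smul_eq G A'
  have hNK : ∀ y ∈ N ⊓ K, ∀ a : A', y • a = a := fun y hy => hK y hy.2
  refine ⟨N ⊓ K, inferInstance, inferInstance, fun y hy a => hφ ?_, α, .of_comp hφ ?_, hDα, hcobα⟩
  · rw [map_smul, hNK y hy]
  · rw [hα]
    exact (hx.mono inf_le_left).cochainD fun y hy _ => hNK y hy _

lemma inflationInjective_zero : InflationInjective G 0 :=
  fun _ _ _ _ N hN hNfin _ _ _ h => ⟨N, hN, hNfin, le_rfl, h⟩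

lemma inflationInjective_succ {n : ℕ} (hsurj : InflationSurjective G n)
    (hinj : InflationInjective G n) : InflationInjective G (n + 1) := by
  intro A _ _ _ N _ _ hNA e he ⟨b, _, hb⟩
  let i := CoinducedModule.unit hNA
  let p := CokernelModule.mk i
  have hi : Function.Injective i := CoinducedModule.unit_injective hNA
  have hip : Function.Exact i p := CokernelModule.exact_mk i
  have hc : i ∘ e = cochainD n he.curry :=
    unit_comp_eq_cochainD_curry hNA he (by rw [hb, cochainD_cochainD])
  obtain ⟨M, _, _, hM, u, hu, hDu, hcob⟩ := hsurj _ (he.curry - i ∘ b) (by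
    rw [cochainD_sub, cochainD_comp, ← hc, hb, sub_self])
  have hMN : ∀ y ∈ N ⊓ M, ∀ a : CoinducedModule N A, y • a = a := fun y hy => hM y hy.2
  have hcu : FactorsThroughQuotient (N ⊓ M) (he.curry - u) :=
    .sub (.mono inf_le_left he.curry_factorsThroughQuotient) (hu.mono inf_le_right)
  have hpcu : IsCoboundary (⊥ : Subgroup G) (p ∘ (he.curry - u)) := by
    convert hcob.comp p using 1
    have hpi : p ∘ i ∘ b = 0 := congrArg (· ∘ b) hip.comp_eq_zero
    simp only [map_comp_sub, hpi, sub_zero]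
  have hMNp : ∀ y ∈ N ⊓ M, ∀ c : CokernelModule i, y • c = c := fun y hy =>
    (CokernelModule.mk_surjective i).forall.2 fun a => by rw [← map_smul, hMN y hy]
  obtain ⟨N', hN', hN'fin, hle, hcob'⟩ := hinj _ (N ⊓ M) hMNp _ (hcu.comp p) hpcu
  obtain ⟨κ, hκ, hpκ⟩ := hcob'.exists_lift (CokernelModule.mk_surjective i)
  obtain ⟨β, hβ⟩ := exists_comp_eq_of_exact hip (f := he.curry - u - κ) (by
    rw [map_comp_sub, hpκ, sub_self])
  refine ⟨N', hN', hN'fin, hle.trans inf_le_left, β, .of_comp hi ?_, hi.comp_left ?_⟩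
  · rw [hβ]
    exact (hcu.mono hle).sub (hκ.factorsThroughQuotient fun y hy => hMN y (hle hy))
  · change i ∘ e = i ∘ cochainD n β
    rw [← cochainD_comp, hβ, cochainD_sub, cochainD_sub, hDu, hκ.cochainD_eq_zero, hc, sub_zero,
      sub_zero]

theorem isGood_of_isEffaceable
    (heff : ∀ (A : Type u) [AddCommGroup A] [DistribMulAction G A] [Finite A] (n : ℕ)
      (f : (Fin (n + 1) → G) → A), cochainD (n + 1) f = 0 → IsEffaceable f) : IsGood G := by
  have hsurj (n : ℕ) : InflationSurjective G n := by
    induction n with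
    | zero => exact inflationSurjective_zero
    | succ n ih => exact inflationSurjective_succ (fun A _ _ _ => heff A n) ih
  have hinj (n : ℕ) : InflationInjective G n := by
    induction n with
    | zero => exact inflationInjective_zero
    | succ n ih => exact inflationInjective_succ (hsurj n) ih
  intro A _ _ _ n
  constructor
  · intro f hf
    obtain ⟨N, hN, hNfin, hNA, e, he, hDe, b, -, hb⟩ := hsurj (n + 1) A f hf
    exact ⟨N, hN, hNfin, hNA, e, b, he, hDe, sub_eq_iff_eq_add'.1 hb⟩
  · rintro N _ _ hNA e he - ⟨b, hb⟩
    exact hinj (n + 1) A N hNA e he ⟨b, .bot b, hb⟩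

namespace IsEffaceable

variable {n : ℕ}

lemma add_cochainD {f : (Fin (n + 1) → G) → A} (hf : IsEffaceable f) (b : (Fin n → G) → A) :
    IsEffaceable (f + cochainD n b) := by
  obtain ⟨A', _, _, hA', φ, c, hφ, hc⟩ := hf
  exact ⟨A', _, _, hA', φ, c + φ ∘ b, hφ, by rw [map_comp_add, hc, cochainD_add, cochainD_comp]⟩

lemma of_injective_comp {B : Type u} [AddCommGroup B] [DistribMulAction G B] {φ : A →+[G] B}
    (hφ : Function.Injective φ) {f : (Fin (n + 1) → G) → A} (hf : IsEffaceable (φ ∘ f)) :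
    IsEffaceable f := by
  obtain ⟨A', _, _, hA', ψ, c, hψ, hc⟩ := hf
  exact ⟨A', _, _, hA', ψ.comp φ, c, hψ.comp hφ, hc⟩

lemma of_factorsThroughQuotient [Finite A] {N : Subgroup G} [N.Normal] [N.FiniteIndex]
    {f : (Fin (n + 1) → G) → A} (hf : FactorsThroughQuotient N f) (hDf : cochainD (n + 1) f = 0) :
    IsEffaceable f := by
  obtain ⟨K, _, _, hK⟩ := exists_normal_finiteIndex_smul_eq G A
  have hNK : ∀ y ∈ N ⊓ K, ∀ a : A, y • a = a := fun y hy => hK y hy.2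
  exact ⟨CoinducedModule (N ⊓ K) A, _, _, inferInstance, CoinducedModule.unit hNK, _,
    CoinducedModule.unit_injective hNK, unit_comp_eq_cochainD_curry hNK (hf.mono inf_le_left) hDf⟩

protected lemma inflation {Q : Type u} [Group Q] (hQ : IsGood Q) [Finite A] {B : Type u}
    [AddCommGroup B] [DistribMulAction Q B] [Finite B] (π : G →* Q) (ι : B →+ A)
    (hι : ∀ (g : G) (b : B), ι (π g • b) = g • ι b) {f : (Fin (n + 1) → Q) → B}
    (hf : cochainD (n + 1) f = 0) : IsEffaceable (inflation π ι f) := by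
  obtain ⟨N, _, _, -, e, b, he, hDe, rfl⟩ := (hQ B ‹_› n).1 f hf
  have : (N.comap π).FiniteIndex :=
    (FiniteIndexNormalSubgroup.comap π { toSubgroup := N }).isFiniteIndex'
  have hDinfl : cochainD (n + 1) (inflation π ι e) = 0 := by
    rw [cochainD_inflation π ι hι, hDe]
    exact funext fun _ => map_zero ι
  have hsplit : inflation π ι (e + cochainD n b) =
      inflation π ι e + cochainD n (inflation π ι b) := by
    rw [cochainD_inflation π ι hι]
    exact funext fun _ => map_add ι _ _
  rw [hsplit]
  exact (of_factorsThroughQuotient (he.inflation π ι) hDinfl).add_cochainD _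

end IsEffaceable

end Effaceability

section Translation

variable {G : Type u} [Group G]

lemma exists_map_mul_eq_mul_map {K : Type u} [Group K] {z : G} {w : K}
    (h : orderOf w ∣ orderOf z) : ∃ s : G → K, ∀ x, s (x * z) = w * s x := by
  have hrep (x : G) : ∃ j : ℤ, (x : G ⧸ Subgroup.zpowers z).out * z ^ j = x := by
    obtain ⟨⟨_, j, rfl⟩, hj⟩ := QuotientGroup.mk_out_eq_mul (Subgroup.zpowers z) x
    exact ⟨-j, by simp [hj]⟩
  choose j hj using hrep
  refine ⟨fun x => w ^ j x, fun x => ?_⟩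
  have hcoset : ((x * z : G) : G ⧸ Subgroup.zpowers z) = x :=
    QuotientGroup.mk_mul_of_mem x (Subgroup.mem_zpowers z)
  have hz : z ^ j (x * z) = z ^ (1 + j x) := by
    have hxz := hj (x * z)
    rw [hcoset] at hxz
    nth_rw 3 [← hj x] at hxz
    rw [mul_assoc, mul_right_inj] at hxz
    rw [hxz, zpow_one_add, (Commute.self_zpow z _).eq]
  rw [← zpow_one_add]
  exact zpow_eq_zpow_iff_modEq.2
    ((zpow_eq_zpow_iff_modEq.1 hz).of_dvd (Int.natCast_dvd_natCast.2 h))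

variable {A : Type u} [AddCommGroup A] [DistribMulAction G A]

/- A solution `b` of `b (x * z) - b x = x • a` is `b x = x • c x`, where `c` is any function with
`c (x * z) = z⁻¹ • (c x + a)`; the powers of this affine permutation of `A`, applied to `0`, give
such a `c`. -/
lemma CoinducedModule.exists_smul_sub_eq_unit {N : Subgroup G} [N.Normal]
    (hN : ∀ x ∈ N, ∀ a : A, x • a = a) {z : G}
    (hz : Monoid.exponent (Equiv.Perm A) ∣ orderOf (z : G ⧸ N)) (a : A) :
    ∃ b : CoinducedModule N A, z • b - b = unit hN a := by
  let σ : Equiv.Perm A := (Equiv.addRight a).trans (MulAction.toPerm z⁻¹)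
  have hσ (c : A) : σ c = z⁻¹ • (c + a) := rfl
  obtain ⟨s, hs⟩ := exists_map_mul_eq_mul_map ((Monoid.order_dvd_exponent σ).trans hz)
  refine ⟨⟨fun x => x • s x 0, fun x y hy => ?_⟩, ext fun x => ?_⟩
  · change (x * y) • s (x * y : G) 0 = x • s x 0
    rw [QuotientGroup.mk_mul_of_mem x hy, mul_smul, hN y hy]
  · change (x * z) • s (x * z : G) 0 - x • s x 0 = x • a
    rw [QuotientGroup.mk_mul, hs, Equiv.Perm.mul_apply, hσ, mul_smul, smul_inv_smul, smul_add,
      add_sub_cancel_left]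

lemma orderOf_mk_bot_eq_zero {z : G} (hz : ¬ IsOfFinOrder z) :
    orderOf (z : G ⧸ (⊥ : Subgroup G)) = 0 := by
  rw [← orderOf_eq_zero hz]
  exact (orderOf_injective QuotientGroup.quotientBot.toMonoidHom
    QuotientGroup.quotientBot.injective (z : G ⧸ (⊥ : Subgroup G))).symm

lemma CoinducedModule.exists_smul_sub_eq {B : Type u} [AddCommGroup B] {z : G}
    (hz : ¬ IsOfFinOrder z) (a : CoinducedModule (⊥ : Subgroup G) B) : ∃ b, z • b - b = a := by
  obtain ⟨c, hc⟩ := exists_smul_sub_eq_unit smul_eq_of_mem_bot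
    (by rw [orderOf_mk_bot_eq_zero hz]; exact dvd_zero _) a
  let ev : CoinducedModule (⊥ : Subgroup G) B →+ B :=
    (Pi.evalAddMonoidHom (fun _ : G => B) 1).comp (CoinducedModule ⊥ B).subtype
  refine ⟨map ev c, ?_⟩
  rw [← map_smul, ← map_sub, hc]
  exact ext fun x => congrArg a.1 (one_mul x)

lemma exists_injective_smul_sub_eq [Finite A] {z : G} {N : Subgroup G} [N.Normal] [N.FiniteIndex]
    (hz : Nat.card (Equiv.Perm A) ∣ orderOf (z : G ⧸ N)) :
    ∃ (A' : Type u) (_ : AddCommGroup A') (_ : DistribMulAction G A') (_ : Finite A')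
      (φ : A →+[G] A'), Function.Injective φ ∧ ∀ a, ∃ a', z • a' - a' = φ a := by
  obtain ⟨K, _, _, hK⟩ := exists_normal_finiteIndex_smul_eq G A
  have hNK : ∀ y ∈ N ⊓ K, ∀ a : A, y • a = a := fun y hy => hK y hy.2
  have horder : orderOf (z : G ⧸ N) ∣ orderOf (z : G ⧸ N ⊓ K) :=
    orderOf_map_dvd (QuotientGroup.map (N ⊓ K) N (MonoidHom.id G) inf_le_left) _
  exact ⟨CoinducedModule (N ⊓ K) A, _, _, inferInstance, CoinducedModule.unit hNK,
    CoinducedModule.unit_injective hNK, CoinducedModule.exists_smul_sub_eq_unit hNK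
      ((Group.exponent_dvd_nat_card.trans hz).trans horder)⟩

lemma dvd_orderOf_mk {z : G} (hz : ¬ IsOfFinOrder z) {N : Subgroup G} [N.Normal] {m : ℕ}
    (hN : ∀ x ∈ N, x ∈ Subgroup.zpowers z → ∃ y ∈ Subgroup.zpowers z, x = y ^ m) :
    m ∣ orderOf (z : G ⧸ N) := by
  have hmem : z ^ orderOf (z : G ⧸ N) ∈ N := by
    rw [← QuotientGroup.eq_one_iff, QuotientGroup.mk_pow, pow_orderOf_eq_one]
  obtain ⟨_, ⟨k, rfl⟩, hk⟩ := hN _ hmem (Subgroup.npow_mem_zpowers z _)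
  refine Int.natCast_dvd_natCast.1 ⟨k, injective_zpow_iff_not_isOfFinOrder.2 hz ?_⟩
  change z ^ (orderOf (z : G ⧸ N) : ℤ) = z ^ ((m : ℤ) * k)
  rw [zpow_natCast, hk, mul_comm, zpow_mul, zpow_natCast]

end Translation

section CentralCyclic

variable {G : Type u} [Group G] {A : Type u} [AddCommGroup A] [DistribMulAction G A]

lemma smul_eq_of_mem_zpowers {z : G} {a : A} (h : z • a = a) :
    ∀ x ∈ Subgroup.zpowers z, x • a = a :=
  Subgroup.zpowers_le.2 (show z ∈ MulAction.stabilizer G a from h)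

section Square

variable {A' I I' : Type u} [AddCommGroup A'] [DistribMulAction G A'] [AddCommGroup I]
  [DistribMulAction G I] [AddCommGroup I'] [DistribMulAction G I']
  {φ : A →+[G] A'} {i : A →+[G] I} {i' : A' →+[G] I'} {Φ : I →+[G] I'}

/- The obstruction to lifting an invariant of the cokernel of `i` to an invariant of `I` is its
image in `A / (z - 1)A`, which `φ` maps to zero. -/
lemma CokernelModule.exists_invariant_lift (hΦ : ∀ a, Φ (i a) = i' (φ a)) {z : G}
    (hφ : ∀ a, ∃ a', z • a' - a' = φ a) {y : CokernelModule i} (hy : z • y = y) :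
    ∃ x : I', mk i' x = map Φ hΦ y ∧ z • x = x := by
  obtain ⟨x, rfl⟩ := mk_surjective i y
  obtain ⟨a, ha⟩ := (exact_mk i (z • x - x)).1 (by rw [map_sub, map_smul, hy, sub_self])
  obtain ⟨m, hm⟩ := hφ a
  refine ⟨Φ x - i' m, ?_, ?_⟩
  · rw [map_sub, (exact_mk i').apply_apply_eq_zero, sub_zero, map_mk]
  · have hdiff : z • Φ x - Φ x = z • i' m - i' m := by
      rw [← map_smul, ← map_sub, ← ha, hΦ, ← hm, map_sub, map_smul]
    rw [smul_sub, sub_eq_sub_iff_sub_eq_sub, hdiff]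

lemma FactorsThroughQuotient.exists_invariant_lift (hΦ : ∀ a, Φ (i a) = i' (φ a)) {z : G}
    (hφ : ∀ a, ∃ a', z • a' - a' = φ a) {N : Subgroup G} {n : ℕ}
    {e : (Fin n → G) → CokernelModule i} (he : FactorsThroughQuotient N e) (hze : z • e = e) :
    ∃ x : (Fin n → G) → I', FactorsThroughQuotient N x ∧ z • x = x ∧
      CokernelModule.mk i' ∘ x = CokernelModule.map Φ hΦ ∘ e := by
  choose s hs hzs using fun y : {y : CokernelModule i // z • y = y} =>
    CokernelModule.exists_invariant_lift hΦ hφ y.2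
  let e₀ : (Fin n → G) → {y : CokernelModule i // z • y = y} := fun g => ⟨e g, congrFun hze g⟩
  have he₀ : FactorsThroughQuotient N e₀ := .of_comp Subtype.val_injective he
  exact ⟨s ∘ e₀, he₀.comp s, funext fun g => hzs (e₀ g), funext fun g => hs (e₀ g)⟩

end Square

/-- A cochain is cohomologous to an inflated one with respect to `z` if it differs by a coboundary
from a cocycle inflated from the quotient by the subgroup `⟨z⟩`, acting on the invariants of `z`. -/
def IsCohomologousToInflated (z : G) {n : ℕ} (f : (Fin n → G) → A) : Prop :=
  ∃ e : (Fin n → G) → A, FactorsThroughQuotient (Subgroup.zpowers z) e ∧ z • e = e ∧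
    cochainD n e = 0 ∧ IsCoboundary (⊥ : Subgroup G) (f - e)

lemma isCohomologousToInflated_comp_zero {A' : Type u} [AddCommGroup A']
    [DistribMulAction G A'] {z : G} (φ : A →+[G] A') {f : (Fin 0 → G) → A}
    (hf : cochainD 0 f = 0) : IsCohomologousToInflated z (φ ∘ f) := by
  refine ⟨φ ∘ f, .of_degree_zero _, funext fun g => ?_, ?_, sub_self _⟩
  · have hfz : z • f g - f g = 0 := by
      simpa [cochainD, ← sub_eq_add_neg, Subsingleton.elim _ g] using congrFun hf fun _ => z
    change z • φ (f g) = φ (f g)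
    rw [← map_smul, sub_eq_zero.1 hfz]
  · rw [cochainD_comp, hf]
    exact funext fun _ => map_zero φ

lemma isCohomologousToInflated_comp_succ {z : G} (hz : z ∈ Subgroup.center G)
    (hzfin : ¬ IsOfFinOrder z) {n : ℕ}
    (ih : ∀ (B : Type u) [AddCommGroup B] [DistribMulAction G B],
      (∀ b : B, ∃ b', z • b' - b' = b) →
        ∀ f : (Fin n → G) → B, cochainD n f = 0 → IsCohomologousToInflated z f)
    {A' : Type u} [AddCommGroup A'] [DistribMulAction G A'] {φ : A →+[G] A'}
    (hφ : ∀ a, ∃ a', z • a' - a' = φ a) {f : (Fin (n + 1) → G) → A}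
    (hf : cochainD (n + 1) f = 0) : IsCohomologousToInflated z (φ ∘ f) := by
  let i : A →+[G] CoinducedModule ⊥ A := CoinducedModule.unit smul_eq_of_mem_bot
  let i' : A' →+[G] CoinducedModule ⊥ A' := CoinducedModule.unit smul_eq_of_mem_bot
  let p := CokernelModule.mk i
  let p' := CokernelModule.mk i'
  have hi' : Function.Injective i' := CoinducedModule.unit_injective _
  let Φ : CoinducedModule (⊥ : Subgroup G) A →+[G] CoinducedModule (⊥ : Subgroup G) A' :=
    CoinducedModule.map (φ : A →+ A')
  have hΦ : ∀ a, Φ (i a) = i' (φ a) := CoinducedModule.map_unit _ _ φ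
  let Φbar : CokernelModule i →+[G] CokernelModule i' := CokernelModule.map Φ hΦ
  let b := (FactorsThroughQuotient.bot f).curry
  have hb : i ∘ f = cochainD n b := unit_comp_eq_cochainD_curry _ (.bot f) hf
  obtain ⟨e, he, hze, hDe, hcob⟩ := ih (CokernelModule i)
    (CokernelModule.exists_smul_sub_eq (CoinducedModule.exists_smul_sub_eq hzfin)) (p ∘ b)
    (cochainD_comp_eq_zero_of_exact (CokernelModule.exact_mk i) hb)
  obtain ⟨x, hx, hzx, hpx⟩ := he.exists_invariant_lift hΦ hφ hze
  have hb' : i' ∘ φ ∘ f = cochainD n (Φ ∘ b) := by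
    rw [cochainD_comp, ← hb]
    exact funext fun g => (hΦ (f g)).symm
  have hDx : cochainD n (p' ∘ x) = 0 := by
    rw [hpx, cochainD_comp, hDe]
    exact funext fun _ => map_zero Φbar
  have hcob' : IsCoboundary (⊥ : Subgroup G) (p' ∘ Φ ∘ b - p' ∘ x) := by
    rw [hpx]
    exact map_comp_sub Φbar (p ∘ b) e ▸ hcob.comp Φbar
  obtain ⟨α, hα, hDα, hcobα⟩ := exists_cocycle_of_lift hi' (CokernelModule.mk_surjective i')
    (CokernelModule.exact_mk i') hb' hDx hcob'
  refine ⟨α, .of_comp hi' ?_, hi'.comp_left ?_, hDα, hcobα⟩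
  · have : (Subgroup.zpowers z).Normal := ⟨fun x hx g => by
      rwa [Subgroup.mem_center_iff.1 (Subgroup.zpowers_le.2 hz hx) g, mul_inv_cancel_right]⟩
    rw [hα]
    exact hx.cochainD fun y hy g => smul_eq_of_mem_zpowers (congrFun hzx g) y hy
  · calc i' ∘ (z • α) = z • (i' ∘ α) := funext fun g => map_smul i' z (α g)
      _ = i' ∘ α := by rw [hα, ← cochainD_smul_of_mem_center hz, hzx]

theorem isCohomologousToInflated_comp {z : G} (hz : z ∈ Subgroup.center G)
    (hzfin : ¬ IsOfFinOrder z) {A' : Type u} [AddCommGroup A'] [DistribMulAction G A']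
    {φ : A →+[G] A'} (hφ : ∀ a, ∃ a', z • a' - a' = φ a) {n : ℕ} {f : (Fin n → G) → A}
    (hf : cochainD n f = 0) : IsCohomologousToInflated z (φ ∘ f) := by
  induction n generalizing A A' with
  | zero => exact isCohomologousToInflated_comp_zero φ hf
  | succ n ih =>
    exact isCohomologousToInflated_comp_succ hz hzfin
      (fun B _ _ hB _ => ih (φ := DistribMulActionHom.id G) hB) hφ hf

end CentralCyclic

section Invariants

variable {G : Type u} [Group G] {Z : Subgroup G} [Z.Normal]
  {A : Type u} [AddCommGroup A] [DistribMulAction G A]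

instance : DistribMulAction (G ⧸ Z) (FixedPoints.addSubgroup Z A) where
  __ := (inferInstance : MulAction (G ⧸ Z) (MulAction.fixedPoints Z A))
  smul_zero q := q.induction_on fun g => Subtype.ext (smul_zero g)
  smul_add q a b := q.induction_on fun g => Subtype.ext (smul_add g (a : A) (b : A))

lemma FactorsThroughQuotient.exists_cocycle_inflation_eq {n : ℕ} {e : (Fin n → G) → A}
    (he : FactorsThroughQuotient Z e) (heZ : ∀ x ∈ Z, ∀ g, x • e g = e g)
    (hDe : cochainD n e = 0) :
    ∃ ε : (Fin n → G ⧸ Z) → FixedPoints.addSubgroup Z A, cochainD n ε = 0 ∧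
      inflation (QuotientGroup.mk' Z) (FixedPoints.addSubgroup Z A).subtype ε = e := by
  let ε : (Fin n → G ⧸ Z) → FixedPoints.addSubgroup Z A :=
    fun q => ⟨e fun i => (q i).out, fun x => heZ x x.2 _⟩
  have hε : inflation (QuotientGroup.mk' Z) (FixedPoints.addSubgroup Z A).subtype ε = e :=
    funext fun g => he _ _ fun i => QuotientGroup.eq.1 (QuotientGroup.out_eq' (g i : G ⧸ Z))
  refine ⟨ε, inflation_injective (QuotientGroup.mk'_surjective Z) Subtype.val_injective _ ?_, hε⟩
  change inflation (QuotientGroup.mk' Z) (FixedPoints.addSubgroup Z A).subtype (cochainD n ε) = 0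
  rw [← cochainD_inflation _ _ fun _ _ => rfl, hε, hDe]

end Invariants

theorem isGood_of_central_extension_general (G : Type u) [Group G] (Z : Subgroup G) [Z.Normal]
    (hcent : Z ≤ Subgroup.center G)
    (z : G) (hz : ¬ IsOfFinOrder z) (hZ : Z = Subgroup.zpowers z)
    (hgood : IsGood (G ⧸ Z))
    (hind : ∀ m : ℕ, 0 < m → ∃ N : Subgroup G, N.Normal ∧ N.FiniteIndex ∧
      ∀ x ∈ N, x ∈ Z → ∃ y ∈ Z, x = y ^ m) :
    IsGood G := by
  subst hZ
  refine isGood_of_isEffaceable fun A _ _ _ n f hf => ?_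
  obtain ⟨N, _, _, hN⟩ := hind (Nat.card (Equiv.Perm A)) Nat.card_pos
  obtain ⟨A', _, _, _, φ, hφ, hφz⟩ := exists_injective_smul_sub_eq (dvd_orderOf_mk hz hN)
  obtain ⟨e, he, hze, hDe, b, -, hb⟩ :=
    isCohomologousToInflated_comp (hcent (Subgroup.mem_zpowers z)) hz hφz hf
  obtain ⟨ε, hDε, rfl⟩ :=
    he.exists_cocycle_inflation_eq (fun x hx g => smul_eq_of_mem_zpowers (congrFun hze g) x hx) hDe
  refine .of_injective_comp hφ ?_
  rw [sub_eq_iff_eq_add'.1 hb]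
  exact (IsEffaceable.inflation hgood _ _ (fun _ _ => rfl) hDε).add_cochainD b

/-- If `1 → Z → G → Q → 1` is a central extension with `Z` infinite cyclic, `Q` good
and residually finite, and the profinite topology of `G` induces the full profinite
topology on `Z`, then `G` is good. -/
theorem isGood_of_central_extension (G : Type u) [Group G] (Z : Subgroup G) [Z.Normal]
    (hcent : Z ≤ Subgroup.center G)
    (z : G) (hz : ¬ IsOfFinOrder z) (hZ : Z = Subgroup.zpowers z)
    (hgood : IsGood (G ⧸ Z)) (hrf : ResiduallyFinite (G ⧸ Z))
    (hind : ∀ m : ℕ, 0 < m → ∃ N : Subgroup G, N.Normal ∧ N.FiniteIndex ∧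
      ∀ x ∈ N, x ∈ Z → ∃ y ∈ Z, x = y ^ m) :
    IsGood G :=
  isGood_of_central_extension_general G Z hcent z hz hZ hgood hind
end

section
/- Conjugacy separability is preserved under free products: if A and B are conjugacy separable groups, then A * B is conjugacy separable. -/
/-- A group is conjugacy separable if any two non-conjugate elements remain
non-conjugate in some finite quotient. -/
def ConjugacySeparable (G : Type u) [Group G] : Prop :=
  ∀ a b : G, ¬ IsConj a b →
    ∃ (Q : Type u) (_ : Group Q) (_ : Finite Q) (f : G →* Q),
      Function.Surjective f ∧ ¬ IsConj (f a) (f b)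

/-!
Let `x` be shortest in its conjugacy class, a product of `n ≥ 2` letters from `A` and `B`, and let
`y` be a product of at most `n` letters. Map `A ∗ B` to a finite group `K` injectively on `1` and
the letters involved, and arrange `3n` points in a circle, so that reading the letters of `x` three
times moves once around it. Each step of the circle, labelled by a letter of a factor, is
completed to a copy of the regular representation of `K`, on which that factor acts; the result is
an action of `A ∗ B` on a finite set, commuting with the rotation by `n` steps. Each letter moves a
point by at most one step, and `x` moves some point of the circle by exactly `n` steps. If `y` were
conjugate to `x` in this action, then `y` would rotate some point by `n` steps; having at most `n`
letters, it can only do so by spelling a cyclic permutation of `x`. Elements with at most one letter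
are separated in `A × B`.
-/

open Monoid

namespace FreeProd

section ConjDistinguishable

variable {G H : Type u} [Group G] [Group H] {x x' y y' : G}

/-- Two elements of a group are conjugacy distinguishable if some finite quotient of the group
separates their conjugacy classes. -/
def ConjDistinguishable (x y : G) : Prop :=
  ∃ (Q : Type u) (_ : Group Q) (_ : Finite Q) (f : G →* Q),
    Function.Surjective f ∧ ¬ IsConj (f x) (f y)

lemma ConjDistinguishable.symm : ConjDistinguishable x y → ConjDistinguishable y x
  | ⟨Q, hQ, hfin, f, hf, h⟩ => ⟨Q, hQ, hfin, f, hf, fun hc => h hc.symm⟩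

lemma ConjDistinguishable.congr (h : ConjDistinguishable x y) (hx : IsConj x x')
    (hy : IsConj y y') : ConjDistinguishable x' y' := by
  obtain ⟨Q, _, _, f, hf, hxy⟩ := h
  exact ⟨Q, ‹_›, ‹_›, f, hf,
    fun hc => hxy ((f.map_isConj hx).trans (hc.trans (f.map_isConj hy).symm))⟩

lemma ConjDistinguishable.of_map {p : G →* H} (hp : Function.Surjective p)
    (h : ConjDistinguishable (p x) (p y)) : ConjDistinguishable x y := by
  obtain ⟨Q, _, _, f, hf, hxy⟩ := h
  exact ⟨Q, ‹_›, ‹_›, f.comp p, hf.comp hp, hxy⟩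

lemma ConjDistinguishable.of_forall_map_conj_ne [Finite H] (f : G →* H)
    (h : ∀ g, f (g * x * g⁻¹) ≠ f y) : ConjDistinguishable x y := by
  refine ⟨f.range, inferInstance, inferInstance, f.rangeRestrict, f.rangeRestrict_surjective,
    fun hc => ?_⟩
  obtain ⟨⟨_, g, rfl⟩, hg⟩ := isConj_iff.1 hc
  exact h g (by simpa using congrArg Subtype.val hg)

end ConjDistinguishable

section ConjugacySeparable

variable {G H : Type u} [Group G] [Group H]

lemma residuallyFinite_of_conjugacySeparable (hG : ConjugacySeparable G) :
    Group.ResiduallyFinite G := by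
  refine Group.residuallyFinite_of_forall_exists_finite_monoidHom fun g hg => ?_
  obtain ⟨Q, _, _, f, -, hf⟩ := hG g 1 (by simpa only [isConj_one_left] using hg)
  exact ⟨Q, ‹_›, ‹_›, f, by simpa only [map_one, isConj_one_left] using hf⟩

lemma conjugacySeparable_prod (hG : ConjugacySeparable G) (hH : ConjugacySeparable H) :
    ConjugacySeparable (G × H) := by
  intro x y hxy
  have : ¬ IsConj x.1 y.1 ∨ ¬ IsConj x.2 y.2 := by
    by_contra! h
    obtain ⟨⟨g, hg⟩, ⟨k, hk⟩⟩ := h.imp isConj_iff.1 isConj_iff.1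
    exact hxy (isConj_iff.2 ⟨(g, k), Prod.ext hg hk⟩)
  rcases this with h | h
  · exact ConjDistinguishable.of_map (p := MonoidHom.fst G H) Prod.fst_surjective (hG _ _ h)
  · exact ConjDistinguishable.of_map (p := MonoidHom.snd G H) Prod.snd_surjective (hH _ _ h)

end ConjugacySeparable

lemma exists_finiteIndexNormalSubgroup_injOn {G : Type*} [Group G] [Group.ResiduallyFinite G]
    {S : Set G} (hS : S.Finite) :
    ∃ N : FiniteIndexNormalSubgroup G, S.InjOn (QuotientGroup.mk' N.toSubgroup) := by
  let D := {p : G × G // p ∈ S ×ˢ S ∧ p.1 ≠ p.2}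
  have : Finite D := ((hS.prod hS).subset fun _ hp => hp.1).to_subtype
  choose N hN using fun p : D =>
    Group.exists_finiteIndexNormalSubgroup_of_residuallyFinite p.1.1 p.1.2 p.2.2
  have : (⨅ p, (N p).toSubgroup).Normal := Subgroup.normal_iInf_normal fun p => (N p).isNormal'
  have : (⨅ p, (N p).toSubgroup).FiniteIndex :=
    Subgroup.finiteIndex_iInf fun p => (N p).isFiniteIndex'
  refine ⟨.ofSubgroup (⨅ p, (N p).toSubgroup), fun s hs t ht hst => ?_⟩
  by_contra hne
  apply hN ⟨(s, t), ⟨hs, ht⟩, hne⟩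
  exact QuotientGroup.eq.2 (Subgroup.mem_iInf.1 (QuotientGroup.eq.1 hst) _)

section ConjMinimal

variable {G : Type*} [Group G]

lemma isConj_mul_comm (a b : G) : IsConj (a * b) (b * a) :=
  isConj_iff.2 ⟨b, by group⟩

lemma isConj_prod_rotate (l : List G) (n : ℕ) : IsConj l.prod (l.rotate n).prod := by
  rw [List.rotate_eq_drop_append_take_mod, List.prod_append]
  conv_lhs => rw [← List.prod_take_mul_prod_drop l (n % l.length)]
  exact isConj_mul_comm _ _

/-- A word in the alphabet `S` is conjugacy minimal if no shorter word in `S` represents a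
conjugate of its product. -/
def IsConjMinimal (S : Set G) (l : List G) : Prop :=
  (∀ s ∈ l, s ∈ S) ∧
    ∀ m : List G, (∀ s ∈ m, s ∈ S) → IsConj l.prod m.prod → l.length ≤ m.length

variable {S : Set G} {l : List G}

lemma exists_isConjMinimal {g : G} (hg : g ∈ Submonoid.closure S) :
    ∃ l, IsConjMinimal S l ∧ IsConj l.prod g := by
  let W : Set (List G) := {l | (∀ s ∈ l, s ∈ S) ∧ IsConj l.prod g}
  have hW : W.Nonempty := by
    obtain ⟨l, hl, rfl⟩ := Submonoid.exists_list_of_mem_closure hg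
    exact ⟨l, hl, IsConj.refl _⟩
  obtain ⟨hS, hconj⟩ := Function.argminOn_mem List.length W hW
  exact ⟨_, ⟨hS, fun m hm h => Function.argminOn_le List.length W
    ⟨hm, h.symm.trans hconj⟩⟩, hconj⟩

lemma IsConjMinimal.rotate (hl : IsConjMinimal S l) (n : ℕ) : IsConjMinimal S (l.rotate n) := by
  refine ⟨fun s hs => hl.1 s (List.mem_rotate.1 hs), fun m hm h => ?_⟩
  rw [List.length_rotate]
  exact hl.2 m hm ((isConj_prod_rotate l n).trans h)

lemma IsConjMinimal.ne_one_of_mem (hl : IsConjMinimal S l) {s : G} (hs : s ∈ l) : s ≠ 1 := by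
  rintro rfl
  obtain ⟨l₁, l₂, rfl⟩ := List.append_of_mem hs
  have := hl.2 (l₁ ++ l₂) (fun s hs => hl.1 s (by grind)) (by simp [-isConj_iff, IsConj.refl])
  grind

lemma IsConjMinimal.mul_notMem {s t : G} {m : List G} (hl : IsConjMinimal S (s :: t :: m)) :
    s * t ∉ S := by
  intro hst
  have := hl.2 ((s * t) :: m) (by grind [hl.1]) (by simp [mul_assoc, -isConj_iff, IsConj.refl])
  grind

end ConjMinimal

section CyclicWord

variable {α : Type*} {L : ℕ}

/-- The word `l` occurs in the circular word `u` at position `r`. -/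
def ReadsFrom (u : ZMod L → α) : ZMod L → List α → Prop
  | _, [] => True
  | r, s :: l => s = u r ∧ ReadsFrom u (r + 1) l

lemma readsFrom_iff_getElem {u : ZMod L → α} {r : ZMod L} {l : List α} :
    ReadsFrom u r l ↔ ∀ (i : ℕ) (hi : i < l.length), l[i] = u (r + i) := by
  induction l generalizing r with
  | nil => simp [ReadsFrom]
  | cons s l ih =>
    rw [ReadsFrom, ih]
    constructor
    · rintro ⟨hs, h⟩ (_ | i) hi
      · simpa using hs
      · simpa [add_assoc, add_comm (1 : ZMod L)] using h i (Nat.lt_of_succ_lt_succ hi)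
    · intro h
      refine ⟨by simpa using h 0 (Nat.zero_lt_succ _), fun i hi => ?_⟩
      simpa [add_assoc, add_comm (1 : ZMod L)] using h (i + 1) (Nat.succ_lt_succ hi)

variable {l : List α} (hl : l ≠ [])

/-- The circular word of length `L` obtained by repeating `l`. It is only meaningful when the length
of `l` divides `L`. -/
def cyclicRepeat (L : ℕ) (hl : l ≠ []) (j : ZMod L) : α :=
  l[j.val % l.length]'(Nat.mod_lt _ (List.length_pos_of_ne_nil hl))

lemma cyclicRepeat_mem (j : ZMod L) : cyclicRepeat L hl j ∈ l :=
  List.getElem_mem _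

variable [NeZero L] (hdvd : l.length ∣ L)
include hdvd

lemma cyclicRepeat_add_natCast (j : ZMod L) (i : ℕ) :
    cyclicRepeat L hl (j + i) =
      l[(i + j.val) % l.length]'(Nat.mod_lt _ (List.length_pos_of_ne_nil hl)) := by
  simp only [cyclicRepeat, ZMod.val_add, ZMod.val_natCast, Nat.add_mod_mod,
    Nat.mod_mod_of_dvd _ hdvd, add_comm i]

lemma cyclicRepeat_periodic : Function.Periodic (cyclicRepeat L hl) (l.length : ZMod L) := by
  intro j
  rw [cyclicRepeat_add_natCast hl hdvd]
  simp only [Nat.add_mod_left, cyclicRepeat]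

lemma readsFrom_cyclicRepeat_iff {r : ZMod L} {m : List α} (hm : m.length = l.length) :
    ReadsFrom (cyclicRepeat L hl) r m ↔ m = l.rotate r.val := by
  simp only [readsFrom_iff_getElem, cyclicRepeat_add_natCast hl hdvd]
  constructor
  · intro h
    refine List.ext_getElem (by simp [hm]) fun i hi _ => ?_
    rw [h i hi, List.getElem_rotate]
  · rintro rfl i hi
    rw [List.getElem_rotate]

lemma exists_rotate_eq_cyclicRepeat_cons_cons (h2 : 2 ≤ l.length) (j : ZMod L) :
    ∃ m, l.rotate j.val = cyclicRepeat L hl j :: cyclicRepeat L hl (j + 1) :: m := by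
  have hread := (readsFrom_cyclicRepeat_iff hl hdvd (List.length_rotate l j.val)).2 rfl
  obtain ⟨s, t, m, hm⟩ : ∃ s t m, l.rotate j.val = s :: t :: m := by
    rcases h : l.rotate j.val with _ | ⟨s, _ | ⟨t, m⟩⟩ <;> grind [List.length_rotate]
  rw [hm] at hread ⊢
  obtain ⟨rfl, rfl, -⟩ := hread
  exact ⟨m, rfl⟩

end CyclicWord

section Arc

variable {L : ℕ} {K : Type*} [Group K] {c : ZMod L → K} {J : Set (ZMod L)}

open Classical in
/-- The copy of `K` attached to the step of the circle from `j` to `j + 1`, which has the label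
`c j`. The points of the circle are the pairs `(j, 1)`; if `c j ≠ 1`, the arc meets the circle in
`arc c j 1 = (j + 1, 1)` and `arc c j (c j) = (j, 1)`, so that multiplication by `c j` is a step
back. -/
noncomputable def arc (c : ZMod L → K) (j : ZMod L) (g : K) : ZMod L × K :=
  if g = c j then (j, 1) else (j + 1, g)

lemma arc_self (j : ZMod L) : arc c j (c j) = (j, 1) := if_pos rfl

lemma arc_of_ne {j : ZMod L} {g : K} (h : g ≠ c j) : arc c j g = (j + 1, g) := if_neg h

/-- The rotation of the circle by `n`, together with its arcs. -/
def shift (K : Type*) (n : ZMod L) : Equiv.Perm (ZMod L × K) :=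
  (Equiv.addRight n).prodCongr (Equiv.refl K)

lemma shift_apply {K : Type*} (n : ZMod L) (p : ZMod L × K) : shift K n p = (p.1 + n, p.2) := rfl

lemma shift_arc {n : ZMod L} (hn : Function.Periodic c n) (j : ZMod L) (g : K) :
    shift K n (arc c j g) = arc c (j + n) g := by
  rw [shift_apply]
  by_cases h : g = c j
  · rw [h, arc_self, ← hn j, arc_self]
  · rw [arc_of_ne h, arc_of_ne (by rwa [hn j]), add_right_comm]

variable (hJ : ∀ j ∈ J, j + 1 ∉ J)
include hJ

lemma eq_and_eq_of_arc_eq_arc {i j : ZMod L} (hi : i ∈ J) (hj : j ∈ J) {g k : K}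
    (h : arc c i g = arc c j k) : i = j ∧ g = k := by
  by_cases hg : g = c i <;> by_cases hk : k = c j
  · rw [hg, hk, arc_self, arc_self] at h
    obtain rfl : i = j := congrArg Prod.fst h
    exact ⟨rfl, hg.trans hk.symm⟩
  · rw [hg, arc_self, arc_of_ne hk] at h
    obtain rfl : i = j + 1 := congrArg Prod.fst h
    exact absurd hi (hJ j hj)
  · rw [hk, arc_self, arc_of_ne hg] at h
    obtain rfl : i + 1 = j := congrArg Prod.fst h
    exact absurd hj (hJ i hi)
  · rw [arc_of_ne hg, arc_of_ne hk] at h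
    exact ⟨add_right_cancel (congrArg Prod.fst h), congrArg Prod.snd h⟩

variable (c) in
/-- The disjoint union of the arcs at a set of positions, no two of which are consecutive. -/
noncomputable def arcEmbedding : (Σ _ : J, K) ↪ ZMod L × K where
  toFun p := arc c p.1 p.2
  inj' := by
    rintro ⟨⟨i, hi⟩, g⟩ ⟨⟨j, hj⟩, k⟩ h
    obtain ⟨rfl, rfl⟩ := eq_and_eq_of_arc_eq_arc hJ hi hj h
    rfl

variable (c) in
/-- The action of `K` by left multiplication on the arcs with positions in `J`, fixing all other
points. -/
noncomputable def arcPerm : K →* Equiv.Perm (ZMod L × K) :=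
  (Equiv.Perm.viaEmbeddingHom (arcEmbedding c hJ)).comp (MulAction.toPermHom K (Σ _ : J, K))

lemma arcPerm_arc {j : ZMod L} (hj : j ∈ J) (k g : K) :
    arcPerm c hJ k (arc c j g) = arc c j (k * g) :=
  Equiv.Perm.viaEmbedding_apply (MulAction.toPerm k) (arcEmbedding c hJ) ⟨⟨j, hj⟩, g⟩

lemma arcPerm_of_forall_ne {p : ZMod L × K} (hp : ∀ j ∈ J, ∀ g, arc c j g ≠ p) (k : K) :
    arcPerm c hJ k p = p :=
  Equiv.Perm.viaEmbedding_apply_of_notMem _ _ _ fun ⟨⟨⟨j, hj⟩, g⟩, h⟩ => hp j hj g h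

lemma arcPerm_label {j : ZMod L} (hj : j ∈ J) (hc : c j ≠ 1) :
    arcPerm c hJ (c j) (j + 1, 1) = (j, 1) := by
  rw [← arc_of_ne hc.symm, arcPerm_arc hJ hj, mul_one, arc_self]

-- In the first case `d` is `-1` or `0`; these asymmetric bounds add up along a word.
lemma arcPerm_step (k : K) (p : ZMod L × K) :
    (∃ d : ℤ, -1 ≤ d ∧ d < 1 ∧ p.1 = (arcPerm c hJ k p).1 + d) ∨
      (p.1 = (arcPerm c hJ k p).1 + 1 ∧ (arcPerm c hJ k p).2 = 1 ∧
        (p.2 = 1 → k = c (arcPerm c hJ k p).1)) := by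
  by_cases hp : ∃ j ∈ J, ∃ g, arc c j g = p
  · obtain ⟨j, hj, g, rfl⟩ := hp
    rw [arcPerm_arc hJ hj]
    by_cases hg : g = c j <;> by_cases hkg : k * g = c j
    · exact .inl ⟨0, by rw [hkg, hg]; simp⟩
    · exact .inl ⟨-1, by simp [hg, arc_self, arc_of_ne (hg ▸ hkg)]⟩
    · rw [hkg, arc_self, arc_of_ne hg]
      exact .inr ⟨rfl, rfl, fun h => by simpa [show g = 1 from h] using hkg⟩
    · exact .inl ⟨0, by simp [arc_of_ne hg, arc_of_ne hkg]⟩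
  · push Not at hp
    exact .inl ⟨0, by simp [arcPerm_of_forall_ne hJ hp]⟩

lemma commute_arcPerm_shift {n : ZMod L} (hcn : Function.Periodic c n)
    (hJn : ∀ j, j + n ∈ J ↔ j ∈ J) (k : K) : Commute (arcPerm c hJ k) (shift K n) := by
  refine Equiv.ext fun p => ?_
  simp only [Equiv.Perm.mul_apply]
  by_cases hp : ∃ j ∈ J, ∃ g, arc c j g = p
  · obtain ⟨j, hj, g, rfl⟩ := hp
    rw [shift_arc hcn, arcPerm_arc hJ ((hJn j).2 hj), arcPerm_arc hJ hj, shift_arc hcn]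
  · push Not at hp
    rw [arcPerm_of_forall_ne hJ hp, arcPerm_of_forall_ne hJ]
    intro j hj g h
    refine hp (j - n) ((hJn _).1 (by rwa [sub_add_cancel])) g ((shift K n).injective ?_)
    rw [shift_arc hcn, sub_add_cancel, h]

end Arc

section Letters

variable (A B : Type*) [Group A] [Group B]

/-- The alphabet of the free product: all elements of the two factors. -/
def letters : Set (Coprod A B) := Set.range Coprod.inl ∪ Set.range Coprod.inr

variable {A B}

lemma isConj_of_isConj_toProd {x y : Coprod A B} (hx : x ∈ letters A B) (hy : y ∈ letters A B)
    (h : IsConj (Coprod.toProd x) (Coprod.toProd y)) : IsConj x y := by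
  have hfst := (MonoidHom.fst A B).map_isConj h
  have hsnd := (MonoidHom.snd A B).map_isConj h
  rcases hx with ⟨a, rfl⟩ | ⟨b, rfl⟩ <;> rcases hy with ⟨a', rfl⟩ | ⟨b', rfl⟩
  · exact (Coprod.inl : A →* Coprod A B).map_isConj hfst
  · obtain ⟨rfl, rfl⟩ : a = 1 ∧ b' = 1 := ⟨isConj_one_left.1 hfst, isConj_one_right.1 hsnd⟩
    simp
  · obtain ⟨rfl, rfl⟩ : a' = 1 ∧ b = 1 := ⟨isConj_one_right.1 hfst, isConj_one_left.1 hsnd⟩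
    simp
  · exact (Coprod.inr : B →* Coprod A B).map_isConj hsnd

lemma injOn_toProd_letters : (letters A B).InjOn Coprod.toProd := by
  rintro _ (⟨a, rfl⟩ | ⟨b, rfl⟩) _ (⟨a', rfl⟩ | ⟨b', rfl⟩) h
  · exact congrArg Coprod.inl (Prod.ext_iff.1 h).1
  · obtain ⟨rfl, rfl⟩ : a = 1 ∧ 1 = b' := Prod.ext_iff.1 h
    simp
  · obtain ⟨rfl, rfl⟩ : 1 = a' ∧ b = 1 := Prod.ext_iff.1 h
    simp
  · exact congrArg Coprod.inr (Prod.ext_iff.1 h).2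

lemma prod_mem_letters_of_length_le_one {l : List (Coprod A B)} (hl : ∀ s ∈ l, s ∈ letters A B)
    (hlen : l.length ≤ 1) : l.prod ∈ letters A B := by
  rcases l with _ | ⟨s, _ | _⟩
  · exact .inl ⟨1, map_one _⟩
  · simpa using hl
  · simp at hlen

end Letters

lemma exists_finite_injOn_of_subset_letters {A B : Type u} [Group A] [Group B]
    [Group.ResiduallyFinite A] [Group.ResiduallyFinite B] {S : Set (Coprod A B)} (hS : S.Finite)
    (hsub : S ⊆ letters A B) :
    ∃ (K : Type u) (_ : Group K) (_ : Finite K) (f : Coprod A B →* K), S.InjOn f := by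
  obtain ⟨N, hN⟩ := exists_finiteIndexNormalSubgroup_injOn (hS.image Coprod.toProd)
  exact ⟨_, inferInstance, inferInstance, (QuotientGroup.mk' N.toSubgroup).comp Coprod.toProd,
    hN.comp (injOn_toProd_letters.mono hsub) (Set.mapsTo_image _ _)⟩

section CircleAction

variable {A B K : Type*} [Group A] [Group B] [Group K] {L : ℕ} {u : ZMod L → Coprod A B}
  {f : Coprod A B →* K}

lemma notMem_range_succ_of_mul_notMem {C : Type*} [Group C] {i : C →* Coprod A B}
    (hi : Set.range i ⊆ letters A B) (halt : ∀ j, u j * u (j + 1) ∉ letters A B) :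
    ∀ j ∈ u ⁻¹' i.range, j + 1 ∉ u ⁻¹' i.range :=
  fun j hj hj' => halt j (hi (i.range.mul_mem hj hj'))

variable (f) (halt : ∀ j, u j * u (j + 1) ∉ letters A B)

/-- The action of the free product in which each factor acts, through `f`, on the arcs labelled by
its own letters. -/
noncomputable def circleAction : Coprod A B →* Equiv.Perm (ZMod L × K) :=
  Coprod.lift
    ((arcPerm (f ∘ u) (notMem_range_succ_of_mul_notMem (i := Coprod.inl)
      Set.subset_union_left halt)).comp (f.comp Coprod.inl))
    ((arcPerm (f ∘ u) (notMem_range_succ_of_mul_notMem (i := Coprod.inr)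
      Set.subset_union_right halt)).comp (f.comp Coprod.inr))

lemma exists_circleAction_eq_arcPerm {s : Coprod A B} (hs : s ∈ letters A B) :
    ∃ (H : Subgroup (Coprod A B)) (hH : ∀ j ∈ u ⁻¹' H, j + 1 ∉ u ⁻¹' H),
      s ∈ H ∧ circleAction f halt s = arcPerm (f ∘ u) hH (f s) := by
  rcases hs with ⟨a, rfl⟩ | ⟨b, rfl⟩
  · exact ⟨(Coprod.inl : A →* Coprod A B).range,
      notMem_range_succ_of_mul_notMem Set.subset_union_left halt, ⟨a, rfl⟩,
      Coprod.lift_apply_inl _ _ a⟩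
  · exact ⟨(Coprod.inr : B →* Coprod A B).range,
      notMem_range_succ_of_mul_notMem Set.subset_union_right halt, ⟨b, rfl⟩,
      Coprod.lift_apply_inr _ _ b⟩

lemma circleAction_of_readsFrom (hne : ∀ j, f (u j) ≠ 1) {l : List (Coprod A B)}
    (hl : ∀ s ∈ l, s ∈ letters A B) {r : ZMod L} (hread : ReadsFrom u r l) :
    circleAction f halt l.prod (r + l.length, 1) = (r, 1) := by
  induction l generalizing r with
  | nil => simp
  | cons s l ih =>
    obtain ⟨rfl, hread⟩ := hread
    obtain ⟨H, hH, hr, heq⟩ := exists_circleAction_eq_arcPerm f halt (hl _ List.mem_cons_self)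
    have ih := ih (fun t ht => hl t (List.mem_cons_of_mem _ ht)) hread
    rw [List.length_cons, Nat.cast_succ, add_comm _ (1 : ZMod L), ← add_assoc, List.prod_cons,
      map_mul, Equiv.Perm.mul_apply, ih, heq]
    exact arcPerm_label hH hr (hne r)

lemma commute_circleAction_shift {n : ZMod L} (hn : Function.Periodic u n) (g : Coprod A B) :
    Commute (circleAction f halt g) (shift K n) := by
  have hletter : ∀ s ∈ letters A B, Commute (circleAction f halt s) (shift K n) := by
    intro s hs
    obtain ⟨H, hH, -, heq⟩ := exists_circleAction_eq_arcPerm f halt hs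
    rw [heq]
    exact commute_arcPerm_shift hH (hn.comp f) (fun j => by simp [hn j]) (f s)
  induction g using Coprod.induction_on with
  | inl a => exact hletter _ (.inl ⟨a, rfl⟩)
  | inr b => exact hletter _ (.inr ⟨b, rfl⟩)
  | mul x y hx hy => rw [map_mul]; exact hx.mul_left hy

lemma exists_shift_circleAction_eq (hne : ∀ j, f (u j) ≠ 1) {l : List (Coprod A B)}
    (hl : ∀ s ∈ l, s ∈ letters A B) (hper : Function.Periodic u l.length) {r : ZMod L}
    (hread : ReadsFrom u r l) {g y : Coprod A B}
    (hg : circleAction f halt (g * l.prod * g⁻¹) = circleAction f halt y) :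
    ∃ p, shift K l.length (circleAction f halt y p) = p := by
  have hl' : circleAction f halt l.prod (shift K l.length (r, 1)) = (r, 1) :=
    circleAction_of_readsFrom f halt hne hl hread
  have hshift := commute_circleAction_shift f halt hper g
  refine ⟨circleAction f halt g (shift K l.length (r, 1)), ?_⟩
  rw [← hg, ← Equiv.Perm.mul_apply (circleAction f halt _), ← map_mul, inv_mul_cancel_right,
    map_mul, Equiv.Perm.mul_apply, hl']
  exact (DFunLike.congr_fun hshift (r, 1)).symm

lemma circleAction_walk {y : List (Coprod A B)} (hy : ∀ s ∈ y, s ∈ letters A B)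
    (hinj : ∀ s ∈ y, ∀ j, f s = f (u j) → s = u j) (p : ZMod L × K) :
    (∃ d : ℤ, -y.length ≤ d ∧ d < y.length ∧ p.1 = (circleAction f halt y.prod p).1 + d) ∨
      (p.1 = (circleAction f halt y.prod p).1 + y.length ∧
        (y ≠ [] → (circleAction f halt y.prod p).2 = 1) ∧
        (p.2 = 1 → ReadsFrom u (circleAction f halt y.prod p).1 y)) := by
  induction y with
  | nil => simp [ReadsFrom]
  | cons s y ih =>
    obtain ⟨H, hH, -, heq⟩ := exists_circleAction_eq_arcPerm f halt (hy s List.mem_cons_self)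
    specialize ih (fun t ht => hy t (List.mem_cons_of_mem _ ht))
      (fun t ht => hinj t (List.mem_cons_of_mem _ ht))
    rw [List.prod_cons, map_mul, Equiv.Perm.mul_apply, heq]
    set q := circleAction f halt y.prod p
    rcases ih with ⟨d, hd, hd', hpq⟩ | ⟨hpq, hq, hread⟩ <;>
      rcases arcPerm_step hH (f s) q with ⟨e, he, he', hstep⟩ | ⟨hstep, hend, hlabel⟩
    · exact .inl ⟨e + d, by grind, by grind, by rw [hpq, hstep]; push_cast; ring⟩
    · exact .inl ⟨1 + d, by grind, by grind, by rw [hpq, hstep]; push_cast; ring⟩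
    · exact .inl ⟨e + y.length, by grind, by grind, by rw [hpq, hstep]; push_cast; ring⟩
    · refine .inr ⟨by rw [hpq, hstep, List.length_cons]; push_cast; ring, fun _ => hend,
        fun hp => ⟨?_, hstep ▸ hread hp⟩⟩
      have hq1 : q.2 = 1 := by
        by_cases hy0 : y = []
        · simpa [q, hy0] using hp
        · exact hq hy0
      exact hinj s List.mem_cons_self _ (hlabel hq1)

lemma readsFrom_of_shift_circleAction_eq {n : ℕ} (hn : n ≠ 0) (hL : 2 * n < L)
    {y : List (Coprod A B)} (hy : ∀ s ∈ y, s ∈ letters A B) (hlen : y.length ≤ n)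
    (hinj : ∀ s ∈ y, ∀ j, f s = f (u j) → s = u j) {p : ZMod L × K}
    (hp : shift K n (circleAction f halt y.prod p) = p) :
    y.length = n ∧ ∃ r, ReadsFrom u r y := by
  obtain ⟨hp1, hp2⟩ := Prod.ext_iff.1 hp
  have eq_of_walk : ∀ d : ℤ, -y.length ≤ d → d ≤ y.length →
      p.1 = (circleAction f halt y.prod p).1 + d → d = n := by
    intro d hd hd' h
    have hmod : ((n : ℤ) : ZMod L) = d := by
      rw [Int.cast_natCast]; exact add_left_cancel (hp1.trans h)
    have hdvd := (ZMod.intCast_eq_intCast_iff_dvd_sub _ _ _).1 hmod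
    have := Int.eq_zero_of_abs_lt_dvd hdvd (by grind)
    linarith
  rcases circleAction_walk f halt hy hinj p with ⟨d, hd, hd', h⟩ | ⟨h, hend, hread⟩
  · grind
  · have hyn : y.length = n := by exact_mod_cast eq_of_walk y.length (by grind) le_rfl (by simpa)
    exact ⟨hyn, _, hread (hp2.symm.trans (hend (by grind)))⟩

end CircleAction

section Separation

variable {A B : Type u} [Group A] [Group B]

lemma conjDistinguishable_of_length_le_one (hAB : ConjugacySeparable (A × B))
    {l m : List (Coprod A B)} (hl : ∀ s ∈ l, s ∈ letters A B) (hm : ∀ s ∈ m, s ∈ letters A B)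
    (hl1 : l.length ≤ 1) (hm1 : m.length ≤ 1) (h : ¬ IsConj l.prod m.prod) :
    ConjDistinguishable l.prod m.prod :=
  .of_map Coprod.toProd_surjective <| hAB _ _ fun hc => h <| isConj_of_isConj_toProd
    (prod_mem_letters_of_length_le_one hl hl1) (prod_mem_letters_of_length_le_one hm hm1) hc

lemma IsConjMinimal.conjDistinguishable [Group.ResiduallyFinite A] [Group.ResiduallyFinite B]
    {l y : List (Coprod A B)} (hl : IsConjMinimal (letters A B) l) (h2 : 2 ≤ l.length)
    (hy : ∀ s ∈ y, s ∈ letters A B) (hlen : y.length ≤ l.length)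
    (hconj : ¬ IsConj l.prod y.prod) : ConjDistinguishable l.prod y.prod := by
  have hl0 : l ≠ [] := by grind
  have hpos : l.length ≠ 0 := by lia
  have : NeZero (3 * l.length) := ⟨by lia⟩
  have hdvd : l.length ∣ 3 * l.length := Nat.dvd_mul_left _ _
  set u := cyclicRepeat (3 * l.length) hl0
  have hul : ∀ j, u j ∈ l := cyclicRepeat_mem hl0
  obtain ⟨K, _, _, f, hf⟩ := exists_finite_injOn_of_subset_letters (A := A) (B := B)
    (S := insert 1 {s | s ∈ l ++ y}) ((l ++ y).finite_toSet.insert 1) (by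
      rintro s (rfl | hs)
      · exact .inl ⟨1, map_one _⟩
      · exact (List.mem_append.1 hs).elim (hl.1 s) (hy s))
  have hne : ∀ j, f (u j) ≠ 1 := fun j hj => hl.ne_one_of_mem (hul j)
    (hf (by grind) (by grind) (hj.trans (map_one f).symm))
  have halt : ∀ j, u j * u (j + 1) ∉ letters A B := by
    intro j
    obtain ⟨m, hm⟩ := exists_rotate_eq_cyclicRepeat_cons_cons hl0 hdvd h2 j
    exact (hm ▸ hl.rotate j.val).mul_notMem
  refine .of_forall_map_conj_ne (circleAction f halt) fun g hg => hconj ?_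
  obtain ⟨p, hp⟩ := exists_shift_circleAction_eq f halt hne hl.1 (cyclicRepeat_periodic hl0 hdvd)
    ((readsFrom_cyclicRepeat_iff (r := 0) hl0 hdvd rfl).2 (by simp)) hg
  obtain ⟨hyl, r, hread⟩ := readsFrom_of_shift_circleAction_eq f halt hpos (by lia) hy hlen
    (fun s hs j => hf (by grind) (by grind)) hp
  rw [(readsFrom_cyclicRepeat_iff hl0 hdvd hyl).1 hread]
  exact isConj_prod_rotate l r.val

end Separation

end FreeProd

open FreeProd

/-- Stebe: the free product of conjugacy separable groups is conjugacy separable. -/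
theorem conjugacySeparable_coprod (A B : Type u) [Group A] [Group B]
    (hA : ConjugacySeparable A) (hB : ConjugacySeparable B) :
    ConjugacySeparable (Monoid.Coprod A B) := by
  intro x y hxy
  have := residuallyFinite_of_conjugacySeparable hA
  have := residuallyFinite_of_conjugacySeparable hB
  have hgen : Submonoid.closure (letters A B) = ⊤ := Coprod.mclosure_range_inl_union_inr
  obtain ⟨l, hl, hlx⟩ := exists_isConjMinimal (S := letters A B) (g := x) (by simp [hgen])
  obtain ⟨m, hm, hmy⟩ := exists_isConjMinimal (S := letters A B) (g := y) (by simp [hgen])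
  have hlm : ¬ IsConj l.prod m.prod := fun h => hxy (hlx.symm.trans (h.trans hmy))
  suffices ConjDistinguishable l.prod m.prod from this.congr hlx hmy
  by_cases hshort : l.length ≤ 1 ∧ m.length ≤ 1
  · exact conjDistinguishable_of_length_le_one (conjugacySeparable_prod hA hB) hl.1 hm.1
      hshort.1 hshort.2 hlm
  rcases le_total m.length l.length with h | h
  · exact hl.conjDistinguishable (by lia) hm.1 h hlm
  · exact (hm.conjDistinguishable (by lia) hl.1 h fun h => hlm h.symm).symm
end
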